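/- Let p : ℕ → [0,1] be nonincreasing, and suppose there exists n₀ ∈ ℕ such that p_n > 0 if and only if n ≤ n₀. For each β > 0 let q_n(β) = e^{−β} β^n / n!. Then limsup_{β→∞} [Σ_{n,m∈ℕ} q_n(β) q_m(β) p_{max(n,m)}] / (Σ_{n∈ℕ} q_n(β) p_n)² < ∞; in other words, the conditional Monte Carlo estimator (and hence the importance sampling estimator) exhibits bounded relative error as the intensity, equivalently β, tends to infinity while the window and threshold are fixed. -/

import Mathlib

/-- The Poisson(β) probability mass function `q_n = e^{-β} β^n / n!`. -/
noncomputable def poissonPMF (β : ℝ) (n : ℕ) : ℝ := Real.exp (-β) * β ^ n / n.factorial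

/-!
An antitone `p` whose nonzero values are at least `c > 0` satisfies
`c * p (max n m) ≤ p n * p m`: if the left side is nonzero, then `c ≤ p (max n m) ≤ p n` and
`p (max n m) ≤ p m`. Averaging against `q n * q m` for any nonnegative weights `q` bounds the
relative second moment by `c⁻¹`, uniformly in the weights. For a fixed window, `c = p n₀`.
-/

theorem nonneg_of_ne_zero_imp_le {R : Type*} [Zero R] [Preorder R] {c x : R} (hc : 0 ≤ c)
    (h : x ≠ 0 → c ≤ x) : 0 ≤ x := by
  rcases eq_or_ne x 0 with hx | hx
  · exact hx.ge
  · exact hc.trans (h hx)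

theorem mul_apply_sup_le_mul_of_antitone {ι R : Type*} [SemilatticeSup ι]
    [MulZeroClass R] [Preorder R] [PosMulMono R] [MulPosMono R] {p : ι → R} {c : R}
    (hp : Antitone p) (hc : 0 ≤ c) (hgap : ∀ i, p i ≠ 0 → c ≤ p i) (i j : ι) :
    c * p (i ⊔ j) ≤ p i * p j := by
  have hp_nonneg (k : ι) : 0 ≤ p k := nonneg_of_ne_zero_imp_le hc (hgap k)
  rcases eq_or_ne (p (i ⊔ j)) 0 with h_zero | h_ne
  · rw [h_zero, mul_zero]
    exact mul_nonneg (hp_nonneg i) (hp_nonneg j)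
  · have hci : c ≤ p i := (hgap _ h_ne).trans (hp le_sup_left)
    exact mul_le_mul hci (hp le_sup_right) (hp_nonneg _) (hp_nonneg i)

theorem tsum_tsum_le_mul_of_le_mul {ι κ : Type*} {K : ι → κ → ℝ} {f : ι → ℝ} {g : κ → ℝ} {C : ℝ}
    (hf : Summable f) (hg : Summable g) (hf_nonneg : 0 ≤ f) (hg_nonneg : 0 ≤ g)
    (hK_nonneg : ∀ i j, 0 ≤ K i j) (hK_le : ∀ i j, K i j ≤ C * (f i * g j)) :
    ∑' i, ∑' j, K i j ≤ C * ((∑' i, f i) * ∑' j, g j) := by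
  have hfg : Summable fun x : ι × κ => f x.1 * g x.2 := hf.mul_of_nonneg hg hf_nonneg hg_nonneg
  have hK : Summable fun x : ι × κ => K x.1 x.2 :=
    .of_nonneg_of_le (fun x => hK_nonneg x.1 x.2) (fun x => hK_le x.1 x.2) (hfg.mul_left C)
  calc
    ∑' i, ∑' j, K i j = ∑' x : ι × κ, K x.1 x.2 := hK.tsum_prod.symm
    _ ≤ ∑' x : ι × κ, C * (f x.1 * g x.2) :=
      hK.tsum_le_tsum (fun x => hK_le x.1 x.2) (hfg.mul_left C)
    _ = C * ((∑' i, f i) * ∑' j, g j) := by rw [tsum_mul_left, hf.tsum_mul_tsum hg hfg]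

theorem tsum_tsum_mul_apply_sup_le {ι : Type*} [SemilatticeSup ι] {q p : ι → ℝ} {c : ℝ}
    (hq : ∀ i, 0 ≤ q i) (hqp : Summable fun i => q i * p i) (hp : Antitone p) (hc : 0 < c)
    (hgap : ∀ i, p i ≠ 0 → c ≤ p i) :
    ∑' i, ∑' j, q i * q j * p (i ⊔ j) ≤ c⁻¹ * (∑' i, q i * p i) ^ 2 := by
  have hp_nonneg (i : ι) : 0 ≤ p i := nonneg_of_ne_zero_imp_le hc.le (hgap i)
  have hqp_nonneg : 0 ≤ fun i => q i * p i := fun i => mul_nonneg (hq i) (hp_nonneg i)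
  have hp_sup_le (i j : ι) : p (i ⊔ j) ≤ c⁻¹ * (p i * p j) :=
    (le_inv_mul_iff₀ hc).2 (mul_apply_sup_le_mul_of_antitone hp hc.le hgap i j)
  rw [sq]
  refine tsum_tsum_le_mul_of_le_mul hqp hqp hqp_nonneg hqp_nonneg
    (fun i j => mul_nonneg (mul_nonneg (hq i) (hq j)) (hp_nonneg _)) fun i j => ?_
  calc
    q i * q j * p (i ⊔ j) ≤ q i * q j * (c⁻¹ * (p i * p j)) :=
      mul_le_mul_of_nonneg_left (hp_sup_le i j) (mul_nonneg (hq i) (hq j))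
    _ = c⁻¹ * (q i * p i * (q j * p j)) := by ring

theorem poissonPMF_nonneg {β : ℝ} (hβ : 0 ≤ β) (n : ℕ) : 0 ≤ poissonPMF β n := by
  unfold poissonPMF
  positivity

theorem poissonPMF_zero_pos (β : ℝ) : 0 < poissonPMF β 0 := by
  simpa [poissonPMF] using Real.exp_pos (-β)

theorem summable_poissonPMF_mul {β : ℝ} {p : ℕ → ℝ} (hβ : 0 ≤ β) (hp : Antitone p)
    (hp_nonneg : ∀ n, 0 ≤ p n) : Summable fun n => poissonPMF β n * p n := by
  have hq : Summable (poissonPMF β) :=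
    (ProbabilityTheory.hasSum_one_poissonMeasure ⟨β, hβ⟩).summable
  exact .of_nonneg_of_le (fun n => mul_nonneg (poissonPMF_nonneg hβ n) (hp_nonneg n))
    (fun n => mul_le_mul_of_nonneg_left (hp n.zero_le) (poissonPMF_nonneg hβ n))
    (hq.mul_right (p 0))

theorem boundedRelativeError_CMC_fixed_window_general {p : ℕ → ℝ} {c β : ℝ} (hp : Antitone p)
    (hp_zero : 0 < p 0) (hc : 0 < c) (hgap : ∀ n, p n ≠ 0 → c ≤ p n) (hβ : 0 ≤ β) :
    (∑' n : ℕ, ∑' m : ℕ, poissonPMF β n * poissonPMF β m * p (max n m)) /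
        (∑' n : ℕ, poissonPMF β n * p n) ^ 2 ≤ c⁻¹ := by
  have hp_nonneg (n : ℕ) : 0 ≤ p n := nonneg_of_ne_zero_imp_le hc.le (hgap n)
  have hqp := summable_poissonPMF_mul hβ hp hp_nonneg
  have hmean_pos : 0 < ∑' n : ℕ, poissonPMF β n * p n :=
    hqp.tsum_pos (fun n => mul_nonneg (poissonPMF_nonneg hβ n) (hp_nonneg n)) 0
      (mul_pos (poissonPMF_zero_pos β) hp_zero)
  rw [div_le_iff₀ (pow_pos hmean_pos 2)]
  exact tsum_tsum_mul_apply_sup_le (poissonPMF_nonneg hβ) hqp hp hc hgap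

/-- Corollary 1: with a fixed window and threshold (so that the nonincreasing
probabilities `p_n` are positive exactly for `n ≤ n₀`), the relative second moment
`E[Ŷ²]/(p*)²` of the conditional Monte Carlo estimator stays bounded as `β → ∞`,
i.e. its limsup is finite: bounded relative error. -/
theorem boundedRelativeError_CMC_fixed_window
    (p : ℕ → ℝ) (hp01 : ∀ n, p n ∈ Set.Icc (0 : ℝ) 1) (hmono : Antitone p)
    (n₀ : ℕ) (hpos : ∀ n, 0 < p n ↔ n ≤ n₀) :
    Filter.IsBoundedUnder (· ≤ ·) Filter.atTop
      (fun β : ℝ =>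
        (∑' n : ℕ, ∑' m : ℕ, poissonPMF β n * poissonPMF β m * p (max n m)) /
          (∑' n : ℕ, poissonPMF β n * p n) ^ 2) := by
  have hgap (n : ℕ) (hn : p n ≠ 0) : p n₀ ≤ p n := hmono ((hpos n).1 ((hp01 n).1.lt_of_ne' hn))
  exact Filter.isBoundedUnder_of_eventually_le <| (Filter.eventually_ge_atTop 0).mono fun _ =>
    boundedRelativeError_CMC_fixed_window_general hmono ((hpos 0).2 n₀.zero_le)
      ((hpos n₀).2 le_rfl) hgap
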